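/- Let n ≥ 2 be an integer, H, c real numbers, and a_1, …, a_n real numbers with a_1 + ⋯ + a_n = 0. Put Q := ∑_{i=1}^n a_i². Then n·H·(∑_{i=1}^n a_i³) − Q·(Q − n(c+H²)) ≥ −Q·P_H(√Q), where P_H(x) := x² + (n(n−2)/√(n(n−1)))·|H|·x − n(c+H²). -/

import Mathlib

/-- The polynomial `P_H(x) = x² + (n(n-2)/√(n(n-1)))|H|x - n(c+H²)`. -/
noncomputable def P (n : ℕ) (H c x : ℝ) : ℝ :=
  x ^ 2 + ((n : ℝ) * ((n : ℝ) - 2) / Real.sqrt ((n : ℝ) * ((n : ℝ) - 1))) * |H| * x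
    - (n : ℝ) * (c + H ^ 2)

/-!
Let `t ≥ 0` be determined by `n (n - 1) t² = ∑ aᵢ²`. As `∑ aᵢ = 0`, Cauchy–Schwarz applied to all
terms but the `i`-th gives `aᵢ ≤ (n - 1) t`, so `∑ (aᵢ - (n - 1) t) (aᵢ + t)² ≤ 0`. Expanded, this
is Okumura's inequality `∑ aᵢ³ ≤ (n - 2) t ∑ aᵢ²`. The cubic is chosen to vanish at every entry of
the extremal configuration `((n - 1) t, -t, …, -t)`. Applying the inequality to `-a` as well bounds
`|∑ aᵢ³|`, hence `H ∑ aᵢ³` from below.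
-/

open Finset

section PowerSums

variable {ι R : Type*} [CommRing R] {s : Finset ι} {a : ι → R}

theorem sum_sub_mul_add_sq_of_sum_eq_zero (ha : ∑ i ∈ s, a i = 0) (m t : R) :
    ∑ i ∈ s, (a i - m) * (a i + t) ^ 2 =
      ∑ i ∈ s, a i ^ 3 + (2 * t - m) * ∑ i ∈ s, a i ^ 2 - #s * (m * t ^ 2) := by
  calc ∑ i ∈ s, (a i - m) * (a i + t) ^ 2
      = ∑ i ∈ s, (a i ^ 3 + (2 * t - m) * a i ^ 2 + (t ^ 2 - 2 * m * t) * a i - m * t ^ 2) :=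
        sum_congr rfl fun i _ => by ring
    _ = _ := by
        simp only [sum_sub_distrib, sum_add_distrib, ← mul_sum, ha, mul_zero, add_zero,
          sum_const, nsmul_eq_mul]
        ring

variable [LinearOrder R] [IsStrictOrderedRing R]

theorem card_mul_sq_le_of_sum_eq_zero (ha : ∑ i ∈ s, a i = 0) {i : ι} (hi : i ∈ s) :
    #s * a i ^ 2 ≤ (#s - 1) * ∑ j ∈ s, a j ^ 2 := by
  classical
  have sum_erase : ∑ j ∈ s.erase i, a j = -a i := by
    rw [sum_erase_eq_sub hi, ha, zero_sub]
  have cauchy_schwarz := sq_sum_le_card_mul_sum_sq (s := s.erase i) (f := a)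
  rw [sum_erase, sum_erase_eq_sub hi, cast_card_erase_of_mem hi, neg_sq] at cauchy_schwarz
  linarith

theorem le_card_sub_one_mul_of_sum_eq_zero (ha : ∑ i ∈ s, a i = 0) {t : R} (ht : 0 ≤ t)
    (hQ : #s * (#s - 1) * t ^ 2 = ∑ i ∈ s, a i ^ 2) {i : ι} (hi : i ∈ s) :
    a i ≤ (#s - 1) * t := by
  have one_le_card : (1 : R) ≤ #s := by exact_mod_cast card_pos.mpr ⟨i, hi⟩
  have sq_le : a i ^ 2 ≤ ((#s - 1) * t) ^ 2 := by
    refine le_of_mul_le_mul_left ?_ (zero_lt_one.trans_le one_le_card)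
    calc #s * a i ^ 2 ≤ (#s - 1) * ∑ j ∈ s, a j ^ 2 := card_mul_sq_le_of_sum_eq_zero ha hi
      _ = #s * ((#s - 1) * t) ^ 2 := by rw [← hQ]; ring
  exact le_of_sq_le_sq sq_le (mul_nonneg (sub_nonneg.mpr one_le_card) ht)

theorem sum_pow_three_le_of_sum_eq_zero (ha : ∑ i ∈ s, a i = 0) {t : R} (ht : 0 ≤ t)
    (hQ : #s * (#s - 1) * t ^ 2 = ∑ i ∈ s, a i ^ 2) :
    ∑ i ∈ s, a i ^ 3 ≤ (#s - 2) * t * ∑ i ∈ s, a i ^ 2 := by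
  have cubic_sum_nonpos : ∑ i ∈ s, (a i - (#s - 1) * t) * (a i + t) ^ 2 ≤ 0 :=
    sum_nonpos fun i hi => mul_nonpos_of_nonpos_of_nonneg
      (sub_nonpos.mpr (le_card_sub_one_mul_of_sum_eq_zero ha ht hQ hi)) (sq_nonneg _)
  rw [sum_sub_mul_add_sq_of_sum_eq_zero ha] at cubic_sum_nonpos
  linear_combination cubic_sum_nonpos + t * hQ

theorem abs_sum_pow_three_le_of_sum_eq_zero (ha : ∑ i ∈ s, a i = 0) {t : R} (ht : 0 ≤ t)
    (hQ : #s * (#s - 1) * t ^ 2 = ∑ i ∈ s, a i ^ 2) :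
    |∑ i ∈ s, a i ^ 3| ≤ (#s - 2) * t * ∑ i ∈ s, a i ^ 2 := by
  refine abs_le'.mpr ⟨sum_pow_three_le_of_sum_eq_zero ha ht hQ, ?_⟩
  have neg_bound := sum_pow_three_le_of_sum_eq_zero (s := s) (a := fun i => -a i)
    (by rw [sum_neg_distrib, ha, neg_zero]) ht (by simpa only [neg_sq] using hQ)
  simpa only [neg_sq, Odd.neg_pow (by decide : Odd 3), sum_neg_distrib] using neg_bound

end PowerSums

theorem okumura_abs_sum_pow_three_le {ι : Type*} {s : Finset ι} (hs : 2 ≤ #s) {a : ι → ℝ}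
    (ha : ∑ i ∈ s, a i = 0) :
    |∑ i ∈ s, a i ^ 3| ≤ (#s - 2) / √(#s * (#s - 1)) * √(∑ i ∈ s, a i ^ 2) ^ 3 := by
  have two_le_card : (2 : ℝ) ≤ #s := by exact_mod_cast hs
  have card_mul_pos : (0 : ℝ) < #s * (#s - 1) := mul_pos (by linarith) (by linarith)
  have sq_sqrt_sum : √(∑ i ∈ s, a i ^ 2) ^ 2 = ∑ i ∈ s, a i ^ 2 :=
    Real.sq_sqrt (sum_nonneg fun i _ => sq_nonneg (a i))
  have scale : #s * (#s - 1) * (√(∑ i ∈ s, a i ^ 2) / √(#s * (#s - 1))) ^ 2 =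
      ∑ i ∈ s, a i ^ 2 := by
    rw [div_pow, sq_sqrt_sum, Real.sq_sqrt card_mul_pos.le, mul_div_cancel₀ _ card_mul_pos.ne']
  calc |∑ i ∈ s, a i ^ 3|
      ≤ (#s - 2) * (√(∑ i ∈ s, a i ^ 2) / √(#s * (#s - 1))) * ∑ i ∈ s, a i ^ 2 :=
        abs_sum_pow_three_le_of_sum_eq_zero ha (by positivity) scale
    _ = (#s - 2) * (√(∑ i ∈ s, a i ^ 2) / √(#s * (#s - 1))) * √(∑ i ∈ s, a i ^ 2) ^ 2 := by
        rw [sq_sqrt_sum]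
    _ = (#s - 2) / √(#s * (#s - 1)) * √(∑ i ∈ s, a i ^ 2) ^ 3 := by ring

/-- The algebraic core of inequality (4.5): for `a₁ + ⋯ + aₙ = 0` and `Q = ∑ aᵢ²`,
`nH ∑ aᵢ³ - Q(Q - n(c+H²)) ≥ -Q P_H(√Q)`. -/
theorem simons_rhs_bound (n : ℕ) (hn : 2 ≤ n) (H c : ℝ) (a : Fin n → ℝ)
    (hsum : ∑ i, a i = 0) :
    (n : ℝ) * H * (∑ i, (a i) ^ 3) -
        (∑ i, (a i) ^ 2) * ((∑ i, (a i) ^ 2) - (n : ℝ) * (c + H ^ 2)) ≥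
      -(∑ i, (a i) ^ 2) * P n H c (Real.sqrt (∑ i, (a i) ^ 2)) := by
  have sq_sqrt_sum : √(∑ i, a i ^ 2) ^ 2 = ∑ i, a i ^ 2 :=
    Real.sq_sqrt (sum_nonneg fun i _ => sq_nonneg (a i))
  have okumura : |∑ i, a i ^ 3| ≤ (n - 2) / √(n * (n - 1)) * √(∑ i, a i ^ 2) ^ 3 := by
    simpa only [card_fin] using
      okumura_abs_sum_pow_three_le (s := univ) (by rwa [card_fin]) hsum
  have cubic_term : -(n * |H| * ((n - 2) / √(n * (n - 1)) * √(∑ i, a i ^ 2) ^ 3)) ≤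
      n * H * ∑ i, a i ^ 3 :=
    calc -(n * |H| * ((n - 2) / √(n * (n - 1)) * √(∑ i, a i ^ 2) ^ 3))
        ≤ -(n * |H| * |∑ i, a i ^ 3|) := by gcongr
      _ = -|n * H * ∑ i, a i ^ 3| := by rw [abs_mul, abs_mul, Nat.abs_cast]
      _ ≤ n * H * ∑ i, a i ^ 3 := neg_abs_le _
  rw [P, ← sq_sqrt_sum, Real.sqrt_sq (Real.sqrt_nonneg _)]
  linear_combination cubic_term
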